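/- Fix α > 1. Suppose that for every β > 0 eigen-data (P(β), H_β, ν_β) for (α,β) is given, with each H_β locally ring-constant, and let μ_β be the associated Gibbs measure. Then, as β → +∞, μ_β converges weakly to (1/2)·(δ_{0^∞} + δ_{1^∞}), where δ_z denotes the Dirac measure at z. -/

import Mathlib

/-!
Write `q = e^{-P}` and, for `s = β` (symbol `0`) or `s = 3β` (symbol `1`), put
`w_n = q^n e^{-s(1-2^{-n})}`, `W = Σ w_n`, `M = Σ n w_n` (sums over `n ≥ 0`).

Testing the eigenmeasure on rings gives `ν[a^n *_a] = w_n / W` for `n ≥ 0` (`nu_ring`,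
`nu_ring_zero`), because `P > 0` prevents `ν` from charging `a^∞`. Hence `ν[0] + ν[1] + ν[2] = 1`
becomes the equation `1 / W_0 + 1 / W_1 = 1 + q e^{-αβ}` (`pressure_eq`). On the other side, the
eigenfunction equation along the points `a^n 2^∞` says that `r_n = w_n H(a^n 2^∞)` satisfies
`r_n - r_{n+1} = H(2^∞) w_n / W` (`rSeq_rec`). Abel summation then gives
`∫_{[a]} H dν = H(2^∞) M / W²` (`setIntegral_cyl`), while each single ring has mass at most
`H(2^∞)` and `∫_{[2]} H dν = H(2^∞) q e^{-αβ}`.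

Up to errors controlled by convexity of `exp`, `W - 1 ≈ e^{-s} q/(1-q)` and
`M ≈ e^{-s} q/(1-q)²`. As `α > 1`, the pressure equation forces `q/(1-q) ~ e^{2β}`, so that both
`M_0 / W_0²` and `M_1 / W_1²` are equivalent to `e^{β}` (`asymptotics`). Thus `[0^N]` and `[1^N]`
each receive asymptotically half of the Gibbs mass, for every `N` (`tendsto_mass`), which is
weak convergence to `½(δ_{0^∞} + δ_{1^∞})`.
-/

open MeasureTheory Filter Topology

noncomputable section

/-- The full shift space `Σ = {0,1,2}^ℕ`. -/
abbrev Sig : Type := ℕ → Fin 3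

/-- The shift map `σ`. -/
def shift (x : Sig) : Sig := fun n => x (n + 1)

/-- The fixed point `0^∞`. -/
def zeroSeq : Sig := fun _ => 0

/-- The fixed point `1^∞`. -/
def oneSeq : Sig := fun _ => 1

/-- Prepending a symbol: `a·x = (a, x₀, x₁, …)`. -/
def cons (a : Fin 3) (x : Sig) : Sig := fun n => Nat.casesOn n a x

open Classical in
/-- The metric `d(x,y) = (1/2)^(min{n : x n ≠ y n})`, with `d(x,x) = 0`. -/
def dist3 (x y : Sig) : ℝ :=
  if h : x ≠ y then (1 / 2 : ℝ) ^ Nat.find (Function.ne_iff.mp h) else 0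

/-- The potential `A_α`. -/
def pot (α : ℝ) (x : Sig) : ℝ :=
  if x 0 = 0 then -dist3 x zeroSeq
  else if x 0 = 1 then -(3 * dist3 x oneSeq)
  else -α

/-- The transfer operator `L_β` (for parameter `α`). -/
def transfer (α β : ℝ) (f : Sig → ℝ) : Sig → ℝ :=
  fun x => ∑ a : Fin 3, Real.exp (β * pot α (cons a x)) * f (cons a x)

/-- The ring `[a^n *_a] = {x : x_i = a for i < n, x_n ≠ a}`. -/
def ringSet (a : Fin 3) (n : ℕ) : Set Sig := {x | (∀ i < n, x i = a) ∧ x n ≠ a}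

/-- The cylinder `[a] = {x : x₀ = a}`. -/
def cyl (a : Fin 3) : Set Sig := {x | x 0 = a}

/-- `H` is locally ring-constant: constant on `[2]` and on each ring `[0^m*₀]`, `[1^m*₁]`. -/
def LocallyRingConstant (H : Sig → ℝ) : Prop :=
  (∀ x ∈ cyl 2, ∀ y ∈ cyl 2, H x = H y) ∧
  (∀ m : ℕ, 1 ≤ m → ∀ x ∈ ringSet 0 m, ∀ y ∈ ringSet 0 m, H x = H y) ∧
  (∀ m : ℕ, 1 ≤ m → ∀ x ∈ ringSet 1 m, ∀ y ∈ ringSet 1 m, H x = H y)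

/-- An eigen-measure for `(α,β)` with exponent `P`:  a Borel probability measure `ν`
with `P > 0` and `∫ L_β f dν = e^P ∫ f dν` for every continuous `f`. -/
structure IsEigenMeasure (α β P : ℝ) (ν : Measure Sig) : Prop where
  P_pos : 0 < P
  prob : IsProbabilityMeasure ν
  eigenMeas : ∀ f : Sig → ℝ, Continuous f →
    ∫ x, transfer α β f x ∂ν = Real.exp P * ∫ x, f x ∂ν

/-- Eigen-data `(P, H, ν)` for `(α,β)`. -/
structure IsEigenData (α β P : ℝ) (H : Sig → ℝ) (ν : Measure Sig) : Prop where
  P_pos : 0 < P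
  H_cont : Continuous H
  H_pos : ∀ x, 0 < H x
  eigenFun : ∀ x, transfer α β H x = Real.exp P * H x
  prob : IsProbabilityMeasure ν
  eigenMeas : ∀ f : Sig → ℝ, Continuous f →
    ∫ x, transfer α β f x ∂ν = Real.exp P * ∫ x, f x ∂ν

/-- The Gibbs measure `μ(B) = (∫_B H dν)/(∫ H dν)`. -/
def gibbs (H : Sig → ℝ) (ν : Measure Sig) : Measure Sig :=
  (ν.withDensity (fun x => ENNReal.ofReal (H x)) Set.univ)⁻¹ •
    ν.withDensity (fun x => ENNReal.ofReal (H x))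

/-- Weak convergence (as `β → +∞`) of a family of measures to a measure `μ∞`:
convergence of integrals of every bounded continuous function. -/
def WeakLimit (μ : ℝ → Measure Sig) (μlim : Measure Sig) : Prop :=
  ∀ f : Sig → ℝ, Continuous f → (∃ C : ℝ, ∀ x, |f x| ≤ C) →
    Tendsto (fun β => ∫ x, f x ∂(μ β)) atTop (nhds (∫ x, f x ∂μlim))

/-- `F(Z,β) = Σ_{k=0}^∞ e^{−kZ}·e^{β/2^{k+1}}`. -/
def Ffun (Z β : ℝ) : ℝ := ∑' k : ℕ, Real.exp (-(k : ℝ) * Z) * Real.exp (β / 2 ^ (k + 1))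

/-- `Fpartial Z β m = F_{m-1}(Z,β) = Σ_{k=0}^{m-1} e^{−kZ}·e^{β/2^{k+1}}` (so `Fpartial Z β 0 = F_{-1} = 0`). -/
def Fpartial (Z β : ℝ) (m : ℕ) : ℝ :=
  ∑ k ∈ Finset.range m, Real.exp (-(k : ℝ) * Z) * Real.exp (β / 2 ^ (k + 1))

/-! ### The weights `q^n e^{-s(1-2^{-n})}` and their sums -/

/-- The weight `w_n = q^n e^{-s(1-2^{-n})}`. With `q = e^{-P}`, and `s = β` for the symbol `0` or
`s = 3β` for the symbol `1`, it is `e^{-nP}` times the exponential of the Birkhoff sum of the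
potential along a run of `n` equal symbols. -/
def wt (s q : ℝ) (n : ℕ) : ℝ := q ^ n * Real.exp (-(s * (1 - (1 / 2) ^ n)))

/-- `W = Σ_{n ≥ 0} w_n`. -/
def Wsum (s q : ℝ) : ℝ := ∑' n, wt s q n

/-- `M = Σ_{n ≥ 0} n w_n`. -/
def Msum (s q : ℝ) : ℝ := ∑' n : ℕ, (n : ℝ) * wt s q n

lemma wt_zero (s q : ℝ) : wt s q 0 = 1 := by simp [wt]

lemma wt_pos {s q : ℝ} (hq : 0 < q) (n : ℕ) : 0 < wt s q n := by
  unfold wt; positivity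

lemma wt_le {s q : ℝ} (hs : 0 ≤ s) (hq : 0 < q) (n : ℕ) : wt s q n ≤ q ^ n := by
  unfold wt
  have h1 : (1 / 2 : ℝ) ^ n ≤ 1 := pow_le_one₀ (by norm_num) (by norm_num)
  have : Real.exp (-(s * (1 - (1 / 2) ^ n))) ≤ 1 := by
    rw [Real.exp_le_one_iff]
    nlinarith
  exact mul_le_of_le_one_right (by positivity) this

lemma wt_eq (s q : ℝ) (n : ℕ) :
    wt s q n = Real.exp (-s) * (q ^ n * Real.exp (s * (1 / 2) ^ n)) := by
  unfold wt
  rw [mul_left_comm, ← Real.exp_add]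
  ring_nf

lemma wt_succ (s q : ℝ) (n : ℕ) :
    wt s q (n + 1) = q * Real.exp (-(s * (1 / 2) ^ (n + 1))) * wt s q n := by
  unfold wt
  rw [mul_mul_mul_comm, ← Real.exp_add, pow_succ']
  ring_nf

lemma wt_ge {s q : ℝ} (hs : 0 ≤ s) (hq : 0 < q) (n : ℕ) :
    Real.exp (-s) * q ^ n ≤ wt s q n := by
  rw [wt_eq]
  have : 1 ≤ Real.exp (s * (1 / 2) ^ n) := Real.one_le_exp (by positivity)
  gcongr
  exact le_mul_of_one_le_right (by positivity) this

/-- Convexity of `exp` between `0` and `s / 2` bounds `e^{s/2^{n+1}}` by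
`1 + 2^{-n} (e^{s/2} - 1)`. -/
lemma wt_succ_le {s q : ℝ} (hq : 0 < q) (hq1 : q < 1) (n : ℕ) :
    wt s q (n + 1) ≤ Real.exp (-s) * (q ^ (n + 1) + (1 / 2) ^ n * Real.exp (s / 2)) := by
  rw [wt_eq]
  have hn1 : (1 / 2 : ℝ) ^ n ≤ 1 := pow_le_one₀ (by norm_num) (by norm_num)
  have hn0 : (0 : ℝ) ≤ (1 / 2 : ℝ) ^ n := by positivity
  have hc := convexOn_exp.2 (Set.mem_univ 0) (Set.mem_univ (s / 2))
    (sub_nonneg.2 hn1) hn0 (by ring)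
  simp only [smul_eq_mul, mul_zero, zero_add, Real.exp_zero, mul_one] at hc
  have he : s * (1 / 2) ^ (n + 1) = (1 / 2) ^ n * (s / 2) := by ring
  rw [he]
  have hqn : q ^ (n + 1) ≤ 1 := pow_le_one₀ hq.le hq1.le
  have hqn0 : 0 < q ^ (n + 1) := by positivity
  gcongr
  have h2 : 0 ≤ (1 / 2 : ℝ) ^ n * Real.exp (s / 2) := by positivity
  nlinarith

lemma summable_wt {s q : ℝ} (hs : 0 ≤ s) (hq : 0 < q) (hq1 : q < 1) : Summable (wt s q) :=
  Summable.of_nonneg_of_le (fun n => (wt_pos hq n).le) (wt_le hs hq)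
    (summable_geometric_of_lt_one hq.le hq1)

lemma hasSum_nat_mul_geom {q : ℝ} (hq : 0 < q) (hq1 : q < 1) :
    HasSum (fun n : ℕ => (n : ℝ) * q ^ n) (q / (1 - q) ^ 2) :=
  hasSum_coe_mul_geometric_of_norm_lt_one (by rwa [Real.norm_of_nonneg hq.le])

lemma summable_nat_mul_wt {s q : ℝ} (hs : 0 ≤ s) (hq : 0 < q) (hq1 : q < 1) :
    Summable (fun n : ℕ => (n : ℝ) * wt s q n) :=
  Summable.of_nonneg_of_le (fun n => mul_nonneg n.cast_nonneg (wt_pos hq n).le)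
    (fun n => mul_le_mul_of_nonneg_left (wt_le hs hq n) n.cast_nonneg)
    (hasSum_nat_mul_geom hq hq1).summable

lemma Wsum_eq {s q : ℝ} (hs : 0 ≤ s) (hq : 0 < q) (hq1 : q < 1) :
    HasSum (fun n => wt s q (n + 1)) (Wsum s q - 1) := by
  have := (hasSum_nat_add_iff' 1).2 (summable_wt hs hq hq1).hasSum
  simpa [wt_zero, Wsum] using this

lemma hasSum_geom_succ {q : ℝ} (hq : 0 < q) (hq1 : q < 1) :
    HasSum (fun n : ℕ => q ^ (n + 1)) (q / (1 - q)) := by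
  have := (hasSum_geometric_of_lt_one hq.le hq1).mul_left q
  simpa [pow_succ', div_eq_mul_inv] using this

lemma Wsum_ge {s q : ℝ} (hs : 0 ≤ s) (hq : 0 < q) (hq1 : q < 1) :
    Real.exp (-s) * (q / (1 - q)) ≤ Wsum s q - 1 :=
  hasSum_le (fun n => wt_ge hs hq (n + 1)) ((hasSum_geom_succ hq hq1).mul_left _)
    (Wsum_eq hs hq hq1)

lemma Wsum_le {s q : ℝ} (hs : 0 ≤ s) (hq : 0 < q) (hq1 : q < 1) :
    Wsum s q - 1 ≤ Real.exp (-s) * (q / (1 - q) + 2 * Real.exp (s / 2)) :=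
  hasSum_le (fun n => wt_succ_le hq hq1 n) (Wsum_eq hs hq hq1)
    (((hasSum_geom_succ hq hq1).add (hasSum_geometric_two.mul_right _)).mul_left _)

lemma Wsum_pos {s q : ℝ} (hs : 0 ≤ s) (hq : 0 < q) (hq1 : q < 1) : 0 < Wsum s q :=
  (summable_wt hs hq hq1).tsum_pos (fun n => (wt_pos hq n).le) 0 (wt_pos hq 0)

lemma Msum_ge {s q : ℝ} (hs : 0 ≤ s) (hq : 0 < q) (hq1 : q < 1) :
    Real.exp (-s) * (q / (1 - q) ^ 2) ≤ Msum s q := by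
  refine hasSum_le (fun n => ?_) ((hasSum_nat_mul_geom hq hq1).mul_left _)
    (summable_nat_mul_wt hs hq hq1).hasSum
  have := mul_le_mul_of_nonneg_left (wt_ge hs hq n) n.cast_nonneg (α := ℝ)
  linarith

lemma Msum_le {s q : ℝ} (hs : 0 ≤ s) (hq : 0 < q) (hq1 : q < 1) :
    Msum s q ≤ Real.exp (-s) * (q / (1 - q) ^ 2 + 4 * Real.exp (s / 2)) := by
  have h2 := hasSum_nat_mul_geom (q := 1 / 2) (by norm_num) (by norm_num)
  have h3 := ((hasSum_nat_mul_geom hq hq1).add (h2.mul_left (2 * Real.exp (s / 2)))).mul_left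
    (Real.exp (-s))
  have : Real.exp (-s) * (q / (1 - q) ^ 2 + 2 * Real.exp (s / 2) * ((1 / 2) / (1 - 1 / 2) ^ 2))
      = Real.exp (-s) * (q / (1 - q) ^ 2 + 4 * Real.exp (s / 2)) := by ring
  rw [this] at h3
  refine hasSum_le (fun n => ?_) (summable_nat_mul_wt hs hq hq1).hasSum h3
  cases n with
  | zero => simp
  | succ n =>
    have := mul_le_mul_of_nonneg_left (wt_succ_le (s := s) hq hq1 n) (n + 1).cast_nonneg (α := ℝ)
    refine this.trans (le_of_eq ?_)
    ring

/-! ### Asymptotics of the normalised sums -/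

/-- The algebra behind `q / (1-q) ~ e^{2β}`: here `t = e^{-2β} q/(1-q)`, `A = e^{-β} W_0`,
`B = e^{β}(W_1 - 1)`, `x = e^{-β}`, and `h` is the eigenvalue equation
`1 / W_0 + 1 / W_1 = 1 + q e^{-αβ}` multiplied by `e^{β}`. -/
lemma t_bounds {t A B x d η : ℝ} (ht : 0 < t) (hA : t ≤ A) (hA' : A ≤ t + η) (hB : t ≤ B)
    (hB' : B ≤ t + η) (hd : 0 ≤ d) (hd' : d ≤ η) (hx : 0 < x) (hx' : x ≤ η)
    (h : 1 / A = B / (1 + x * B) + d) : 1 - 2 * η ≤ t ∧ t ≤ 1 + 2 * η := by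
  have hη : 0 ≤ η := hd.trans hd'
  have hBp : 0 < B := ht.trans_le hB
  have hAp : 0 < A := ht.trans_le hA
  have hW : 1 ≤ 1 + x * B := by nlinarith
  constructor
  · have h1 : B / (1 + x * B) ≤ B := div_le_self hBp.le hW
    have h2 : 1 / A ≤ t + 2 * η := by linarith
    rw [div_le_iff₀ hAp] at h2
    have h3 : (t + 2 * η) * A ≤ (t + 2 * η) * (t + 2 * η) := by
      apply mul_le_mul_of_nonneg_left <;> linarith
    nlinarith
  · have h1 : B / (1 + x * B) ≤ 1 / A := by linarith
    rw [div_le_div_iff₀ (by linarith) hAp] at h1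
    have h2 : t * t ≤ B * A := mul_le_mul hB hA ht.le hBp.le
    have h3 : x * B ≤ η * (t + η) := mul_le_mul hx' hB' hBp.le hη
    by_contra hcon
    push Not at hcon
    nlinarith [mul_nonneg hη hη]

lemma tendsto_exp_neg_mul {c : ℝ} (hc : 0 < c) :
    Tendsto (fun β : ℝ => Real.exp (-(c * β))) atTop (𝓝 0) :=
  Real.tendsto_exp_neg_atTop_nhds_zero.comp (tendsto_id.const_mul_atTop hc)

/-- If `1 / W_0 + 1 / W_1 = 1 + q e^{-αβ}` with `α > 1`, the quantities `M_0 / W_0²` and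
`M_1 / W_1²`, which are the `H dν`-masses of `[0]` and `[1]` up to a common factor, are both
equivalent to `e^{β}`. -/
lemma asymptotics {α : ℝ} (hα : 1 < α) {q : ℝ → ℝ} (hq : ∀ β > 0, 0 < q β ∧ q β < 1)
    (hc : ∀ β > 0, 1 / Wsum β (q β) + 1 / Wsum (3 * β) (q β) = 1 + q β * Real.exp (-(α * β))) :
    Tendsto (fun β => Real.exp (-β) * (Msum β (q β) / Wsum β (q β) ^ 2)) atTop (𝓝 1) ∧
    Tendsto (fun β => Real.exp (-β) * (Msum (3 * β) (q β) / Wsum (3 * β) (q β) ^ 2))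
      atTop (𝓝 1) := by
  set t : ℝ → ℝ := fun β => Real.exp (-(2 * β)) * (q β / (1 - q β)) with ht
  set A : ℝ → ℝ := fun β => Real.exp (-β) * Wsum β (q β) with hA
  set B : ℝ → ℝ := fun β => Real.exp β * (Wsum (3 * β) (q β) - 1) with hB
  set η : ℝ → ℝ := fun β => 3 * Real.exp (-(1 / 2 * β)) + Real.exp (-((α - 1) * β)) with hη
  have hη0 : Tendsto η atTop (𝓝 0) := by
    simpa only [mul_zero, add_zero] using
      ((tendsto_exp_neg_mul (c := 1 / 2) (by norm_num)).const_mul 3).add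
      (tendsto_exp_neg_mul (c := α - 1) (by linarith))
  have key : ∀ β > 0, 0 < t β ∧ t β ≤ A β ∧ A β ≤ t β + η β ∧ t β ≤ B β ∧ B β ≤ t β + η β ∧
      1 - 2 * η β ≤ t β ∧ t β ≤ 1 + 2 * η β := by
    intro β hβ
    obtain ⟨hq0, hq1⟩ := hq β hβ
    have hTp : 0 < q β / (1 - q β) := div_pos hq0 (by linarith)
    have htp : 0 < t β := by simp only [ht]; positivity
    have e0 : Real.exp (-(1 / 2 * β)) > 0 := Real.exp_pos _
    have e1 : Real.exp (-((α - 1) * β)) > 0 := Real.exp_pos _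
    have e2 : Real.exp (-β) ≤ Real.exp (-(1 / 2 * β)) := Real.exp_le_exp.2 (by linarith)
    have e3 : Real.exp (-(3 / 2 * β)) ≤ Real.exp (-(1 / 2 * β)) :=
      Real.exp_le_exp.2 (by linarith)
    have w0 := mul_le_mul_of_nonneg_left (Wsum_ge hβ.le hq0 hq1) (Real.exp_pos (-β)).le
    have w1 := mul_le_mul_of_nonneg_left (Wsum_le hβ.le hq0 hq1) (Real.exp_pos (-β)).le
    have hβ3 : 0 ≤ 3 * β := by linarith
    have w2 := mul_le_mul_of_nonneg_left (Wsum_ge hβ3 hq0 hq1) (Real.exp_pos β).le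
    have w3 := mul_le_mul_of_nonneg_left (Wsum_le hβ3 hq0 hq1) (Real.exp_pos β).le
    have m1 : Real.exp (-β) * Real.exp (-β) = Real.exp (-(2 * β)) := by
      rw [← Real.exp_add]; ring_nf
    have m2 : Real.exp β * Real.exp (-(3 * β)) = Real.exp (-(2 * β)) := by
      rw [← Real.exp_add]; ring_nf
    have m3 : Real.exp (-(2 * β)) * Real.exp (β / 2) = Real.exp (-(3 / 2 * β)) := by
      rw [← Real.exp_add]; ring_nf
    have m4 : Real.exp (-(2 * β)) * Real.exp (3 * β / 2) = Real.exp (-(1 / 2 * β)) := by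
      rw [← Real.exp_add]; ring_nf
    rw [← mul_assoc] at w0 w1 w2 w3
    rw [m1] at w0 w1
    rw [m2] at w2 w3
    rw [mul_add, mul_left_comm] at w1 w3
    rw [m3] at w1
    rw [m4] at w3
    have a1 : t β ≤ A β := by simp only [ht, hA]; nlinarith [Real.exp_pos (-β)]
    have a2 : A β ≤ t β + η β := by simp only [ht, hA, hη]; nlinarith
    have b1 : t β ≤ B β := by simp only [ht, hB]; linarith
    have b2 : B β ≤ t β + η β := by simp only [ht, hB, hη]; linarith
    have W0 := Wsum_pos hβ.le hq0 hq1
    have W1 := Wsum_pos hβ3 hq0 hq1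
    refine ⟨htp, a1, a2, b1, b2, ?_⟩
    refine t_bounds (x := Real.exp (-β)) (d := q β * Real.exp (-((α - 1) * β))) htp a1 a2 b1 b2
      (by positivity) ?_ (Real.exp_pos _) (by simp only [hη]; linarith) ?_
    · simp only [hη]; nlinarith
    · have hc' := hc β hβ
      have m5 : Real.exp (-β) * B β = Wsum (3 * β) (q β) - 1 := by
        simp only [hB]; rw [← mul_assoc, ← Real.exp_add]; simp
      rw [m5, add_sub_cancel]
      have m6 : Real.exp (-((α - 1) * β)) = Real.exp β * Real.exp (-(α * β)) := by
        rw [← Real.exp_add]; ring_nf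
      rw [m6]
      simp only [hA, hB]
      have m7 : 1 / (Real.exp (-β) * Wsum β (q β)) = Real.exp β * (1 / Wsum β (q β)) := by
        rw [Real.exp_neg]; field_simp
      rw [m7, show 1 / Wsum β (q β) = 1 + q β * Real.exp (-(α * β)) - 1 / Wsum (3 * β) (q β) by
        linarith]
      generalize Wsum (3 * β) (q β) = w at W1
      field_simp
      ring
  have hev : ∀ᶠ β : ℝ in atTop, 0 < β := eventually_gt_atTop 0
  have tt : Tendsto t atTop (𝓝 1) := by
    have l : Tendsto (fun β => 1 - 2 * η β) atTop (𝓝 1) := by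
      simpa using (hη0.const_mul 2).const_sub 1
    have u : Tendsto (fun β => 1 + 2 * η β) atTop (𝓝 1) := by
      simpa using (hη0.const_mul 2).const_add 1
    refine tendsto_of_tendsto_of_tendsto_of_le_of_le' l u ?_ ?_
    · filter_upwards [hev] with β hβ using (key β hβ).2.2.2.2.2.1
    · filter_upwards [hev] with β hβ using (key β hβ).2.2.2.2.2.2
  have tη : Tendsto (fun β => t β + η β) atTop (𝓝 1) := by simpa using tt.add hη0
  have tA : Tendsto A atTop (𝓝 1) := by
    refine tendsto_of_tendsto_of_tendsto_of_le_of_le' tt tη ?_ ?_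
    · filter_upwards [hev] with β hβ using (key β hβ).2.1
    · filter_upwards [hev] with β hβ using (key β hβ).2.2.1
  have tB : Tendsto B atTop (𝓝 1) := by
    refine tendsto_of_tendsto_of_tendsto_of_le_of_le' tt tη ?_ ?_
    · filter_upwards [hev] with β hβ using (key β hβ).2.2.2.1
    · filter_upwards [hev] with β hβ using (key β hβ).2.2.2.2.1
  have hexp1 := tendsto_exp_neg_mul (c := 1) one_pos
  have tW1 : Tendsto (fun β => Wsum (3 * β) (q β)) atTop (𝓝 1) := by
    have := (hexp1.mul tB).const_add 1
    simp only [zero_mul, add_zero] at this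
    refine this.congr fun β => ?_
    simp only [hB, one_mul]
    rw [← mul_assoc, ← Real.exp_add]; simp
  -- the common main term `e^{-4β} q / (1-q)² = t (e^{-2β} + t)` of the two first moments
  have tm : Tendsto (fun β => t β * (Real.exp (-(2 * β)) + t β)) atTop (𝓝 1) := by
    simpa using tt.mul ((tendsto_exp_neg_mul (c := 2) two_pos).add tt)
  have hm : ∀ β > 0, Real.exp (-(4 * β)) * (q β / (1 - q β) ^ 2)
      = t β * (Real.exp (-(2 * β)) + t β) := by
    intro β hβ
    have : 1 - q β ≠ 0 := by linarith [(hq β hβ).2]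
    have m : Real.exp (-(4 * β)) = Real.exp (-(2 * β)) * Real.exp (-(2 * β)) := by
      rw [← Real.exp_add]; ring_nf
    simp only [ht]
    rw [m]
    field_simp
    ring
  have tN0 : Tendsto (fun β => Real.exp (-(3 * β)) * Msum β (q β)) atTop (𝓝 1) := by
    have u : Tendsto (fun β => t β * (Real.exp (-(2 * β)) + t β) +
        4 * Real.exp (-(7 / 2 * β))) atTop (𝓝 1) := by
      simpa using tm.add ((tendsto_exp_neg_mul (c := 7 / 2) (by norm_num)).const_mul 4)
    have m1 : ∀ β : ℝ, Real.exp (-(3 * β)) * Real.exp (-β) = Real.exp (-(4 * β)) := by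
      intro β; rw [← Real.exp_add]; ring_nf
    refine tendsto_of_tendsto_of_tendsto_of_le_of_le' tm u ?_ ?_
    · filter_upwards [hev] with β hβ
      rw [← hm β hβ, ← m1, mul_assoc]
      exact mul_le_mul_of_nonneg_left (Msum_ge hβ.le (hq β hβ).1 (hq β hβ).2) (Real.exp_pos _).le
    · filter_upwards [hev] with β hβ
      have m2 : Real.exp (-(7 / 2 * β)) = Real.exp (-(4 * β)) * Real.exp (β / 2) := by
        rw [← Real.exp_add]; ring_nf
      rw [← hm β hβ, m2, mul_left_comm, ← mul_add, ← m1, mul_assoc]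
      exact mul_le_mul_of_nonneg_left (Msum_le hβ.le (hq β hβ).1 (hq β hβ).2) (Real.exp_pos _).le
  have tN1 : Tendsto (fun β => Real.exp (-β) * Msum (3 * β) (q β)) atTop (𝓝 1) := by
    have u : Tendsto (fun β => t β * (Real.exp (-(2 * β)) + t β) +
        4 * Real.exp (-(5 / 2 * β))) atTop (𝓝 1) := by
      simpa using tm.add ((tendsto_exp_neg_mul (c := 5 / 2) (by norm_num)).const_mul 4)
    have m1 : ∀ β : ℝ, Real.exp (-β) * Real.exp (-(3 * β)) = Real.exp (-(4 * β)) := by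
      intro β; rw [← Real.exp_add]; ring_nf
    refine tendsto_of_tendsto_of_tendsto_of_le_of_le' tm u ?_ ?_
    · filter_upwards [hev] with β hβ
      rw [← hm β hβ, ← m1, mul_assoc]
      exact mul_le_mul_of_nonneg_left
        (Msum_ge (by linarith) (hq β hβ).1 (hq β hβ).2) (Real.exp_pos _).le
    · filter_upwards [hev] with β hβ
      have m2 : Real.exp (-(5 / 2 * β)) = Real.exp (-(4 * β)) * Real.exp (3 * β / 2) := by
        rw [← Real.exp_add]; ring_nf
      rw [← hm β hβ, m2, mul_left_comm, ← mul_add, ← m1, mul_assoc]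
      exact mul_le_mul_of_nonneg_left
        (Msum_le (by linarith) (hq β hβ).1 (hq β hβ).2) (Real.exp_pos _).le
  constructor
  · have := tN0.div (tA.pow 2) (by norm_num)
    simp only [one_pow, div_one] at this
    refine this.congr fun β => ?_
    have m : Real.exp (-(3 * β)) = Real.exp (-β) * Real.exp (-β) ^ 2 := by
      rw [← Real.exp_nat_mul, ← Real.exp_add]; push_cast; ring_nf
    simp only [hA, Pi.div_apply]
    rw [m, mul_pow, mul_right_comm, mul_comm (Real.exp (-β) ^ 2) (Wsum _ _ ^ 2),
      mul_div_mul_right _ _ (by positivity), mul_div_assoc]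
  · have := tN1.div (tW1.pow 2) (by norm_num)
    simp only [one_pow, div_one] at this
    refine this.congr fun β => ?_
    simp only [Pi.div_apply]
    rw [mul_div_assoc]

/-! ### Runs of equal symbols -/

/-- The cylinder `[a^n]` of sequences beginning with `n` symbols `a`. -/
def runCyl (a : Fin 3) (n : ℕ) : Set Sig := {x | ∀ i < n, x i = a}

/-- The sequence `a^n 2^∞`, a representative of the ring `[a^n *_a]` when `a ≠ 2`. -/
def runPt (a : Fin 3) (n : ℕ) : Sig := fun i => if i < n then a else 2

lemma cons_zero (a : Fin 3) (x : Sig) : cons a x 0 = a := rfl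

lemma cons_succ (a : Fin 3) (x : Sig) (n : ℕ) : cons a x (n + 1) = x n := rfl

lemma cons_runPt (a : Fin 3) (n : ℕ) : cons a (runPt a n) = runPt a (n + 1) := by
  funext i
  cases i with
  | zero => simp [cons_zero, runPt]
  | succ i => simp [cons_succ, runPt]

lemma runPt_mem {a : Fin 3} (ha : a ≠ 2) (n : ℕ) : runPt a n ∈ ringSet a n :=
  ⟨fun i hi => by simp [runPt, hi], by simpa [runPt] using ha.symm⟩

lemma runCyl_zero (a : Fin 3) : runCyl a 0 = Set.univ := by ext; simp [runCyl]

lemma runCyl_one (a : Fin 3) : runCyl a 1 = cyl a := by ext; simp [runCyl, cyl]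

lemma runCyl_succ (a : Fin 3) (n : ℕ) : runCyl a (n + 1) = runCyl a n ∩ {x | x n = a} := by
  ext x
  simp only [runCyl, Set.mem_inter_iff, Set.mem_ofPred_eq]
  exact Nat.forall_lt_succ_right

lemma isClopen_coord (a : Fin 3) (n : ℕ) : IsClopen {x : Sig | x n = a} :=
  (isClopen_discrete {a}).preimage (continuous_apply n)

lemma isClopen_runCyl (a : Fin 3) (n : ℕ) : IsClopen (runCyl a n) := by
  induction n with
  | zero => rw [runCyl_zero]; exact isClopen_univ
  | succ n ih => rw [runCyl_succ]; exact ih.inter (isClopen_coord a n)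

lemma ringSet_eq (a : Fin 3) (n : ℕ) : ringSet a n = runCyl a n \ runCyl a (n + 1) := by
  ext x
  rw [runCyl_succ]
  simp [ringSet, runCyl]

lemma runCyl_succ_subset (a : Fin 3) (n : ℕ) : runCyl a (n + 1) ⊆ runCyl a n := by
  rw [runCyl_succ]; exact Set.inter_subset_left

lemma isClopen_ringSet (a : Fin 3) (n : ℕ) : IsClopen (ringSet a n) := by
  rw [ringSet_eq]; exact (isClopen_runCyl a n).diff (isClopen_runCyl a (n + 1))

lemma cons_mem_ringSet {a : Fin 3} {n : ℕ} {x : Sig} :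
    cons a x ∈ ringSet a (n + 1) ↔ x ∈ ringSet a n := by
  simp only [ringSet, Set.mem_ofPred_eq, cons_succ]
  refine and_congr_left fun _ => ⟨fun h i hi => h (i + 1) (by omega), fun h i hi => ?_⟩
  cases i with
  | zero => rfl
  | succ i => exact h i (by omega)

lemma cons_mem_runCyl {a : Fin 3} {n : ℕ} {x : Sig} :
    cons a x ∈ runCyl a (n + 1) ↔ x ∈ runCyl a n := by
  simp only [runCyl, Set.mem_ofPred_eq]
  refine ⟨fun h i hi => h (i + 1) (by omega), fun h i hi => ?_⟩
  cases i with
  | zero => rfl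
  | succ i => exact h i (by omega)

lemma cons_notMem_of_ne {a c : Fin 3} (h : c ≠ a) (n : ℕ) (x : Sig) :
    cons c x ∉ runCyl a (n + 1) := fun hx => h (hx 0 (by omega))

/-! ### The potential on rings -/

lemma dist3_ring {a : Fin 3} {n : ℕ} {x : Sig} (hx : x ∈ ringSet a n) :
    dist3 x (fun _ => a) = (1 / 2) ^ n := by
  have hne : x ≠ fun _ => a := fun h => hx.2 (by rw [h])
  rw [dist3, dif_pos hne]
  congr 1
  rw [Nat.find_eq_iff]
  exact ⟨hx.2, fun i hi h => h (hx.1 i hi)⟩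

lemma dist3_nonneg (x y : Sig) : 0 ≤ dist3 x y := by
  unfold dist3
  split_ifs <;> positivity

lemma pot_nonpos {α : ℝ} (hα : 0 ≤ α) (x : Sig) : pot α x ≤ 0 := by
  have h0 := dist3_nonneg x zeroSeq
  have h1 := dist3_nonneg x oneSeq
  unfold pot
  split_ifs <;> linarith

lemma pot_ring_zero (α : ℝ) (n : ℕ) (x : Sig) (hx : x ∈ ringSet 0 (n + 1)) :
    pot α x = -(1 * (1 / 2) ^ (n + 1)) := by
  have h0 : x 0 = 0 := hx.1 0 (by omega)
  have : dist3 x zeroSeq = _ := dist3_ring hx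
  rw [pot, if_pos h0, this, one_mul]

lemma pot_ring_one (α : ℝ) (n : ℕ) (x : Sig) (hx : x ∈ ringSet 1 (n + 1)) :
    pot α x = -(3 * (1 / 2) ^ (n + 1)) := by
  have h0 : x 0 = 1 := hx.1 0 (by omega)
  have : dist3 x oneSeq = _ := dist3_ring hx
  rw [pot, if_neg (by simp [h0]), if_pos h0, this]

lemma pot_two (α : ℝ) (x : Sig) : pot α (cons 2 x) = -α := by
  simp [pot, cons_zero]

/-! ### The transfer operator on indicator functions -/

/-- If every point of `s` begins with `a`, only the branch `a` contributes to `L_β 1_s`. -/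
lemma transfer_indicator {α β : ℝ} {a : Fin 3} {s : Set Sig} (hs : s ⊆ cyl a) (x : Sig) :
    transfer α β (s.indicator 1) x
      = Real.exp (β * pot α (cons a x)) * s.indicator 1 (cons a x) := by
  unfold transfer
  refine Finset.sum_eq_single a (fun c _ hc => ?_) (by simp)
  rw [Set.indicator_of_notMem (fun h => hc (hs h)), mul_zero]

section measure

variable {α β P : ℝ} {H : Sig → ℝ} {ν : Measure Sig}

lemma eigen_indicator (hE : IsEigenData α β P H ν) {s : Set Sig} (hs : IsClopen s) :
    ∫ x, transfer α β (s.indicator 1) x ∂ν = Real.exp P * ν.real s := by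
  rw [hE.eigenMeas _ (hs.continuous_indicator continuous_one),
    integral_indicator_one hs.isOpen.measurableSet]

lemma nu_ring_succ (hE : IsEigenData α β P H ν) {a : Fin 3} {κ : ℝ}
    (hpot : ∀ n, ∀ x ∈ ringSet a (n + 1), pot α x = -(κ * (1 / 2) ^ (n + 1))) (n : ℕ) :
    ν.real (ringSet a (n + 1))
      = Real.exp (-P) * Real.exp (-(κ * β * (1 / 2) ^ (n + 1))) * ν.real (ringSet a n) := by
  have h := eigen_indicator hE (isClopen_ringSet a (n + 1))
  have h2 : ∀ x, transfer α β ((ringSet a (n + 1)).indicator 1) x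
      = Real.exp (-(κ * β * (1 / 2) ^ (n + 1))) * (ringSet a n).indicator 1 x := by
    intro x
    rw [transfer_indicator (a := a) (fun x hx => hx.1 0 (by omega))]
    by_cases hx : x ∈ ringSet a n
    · have hx' := cons_mem_ringSet.2 hx
      rw [Set.indicator_of_mem hx, Set.indicator_of_mem hx', hpot n _ hx']
      congr 2
      ring
    · rw [Set.indicator_of_notMem hx, Set.indicator_of_notMem (mt cons_mem_ringSet.1 hx)]
      simp
  simp_rw [h2] at h
  rw [integral_const_mul, integral_indicator_one (isClopen_ringSet a n).isOpen.measurableSet] at h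
  rw [mul_assoc, h, ← mul_assoc, ← Real.exp_add]
  simp

lemma nu_ring (hE : IsEigenData α β P H ν) {a : Fin 3} {κ : ℝ}
    (hpot : ∀ n, ∀ x ∈ ringSet a (n + 1), pot α x = -(κ * (1 / 2) ^ (n + 1))) (n : ℕ) :
    ν.real (ringSet a n) = wt (κ * β) (Real.exp (-P)) n * ν.real (ringSet a 0) := by
  induction n with
  | zero => rw [wt_zero, one_mul]
  | succ n ih => rw [nu_ring_succ hE hpot, ih, wt_succ]; ring

/-- As `A ≤ 0`, prepending a symbol costs at least `e^{-P}`; in particular `ν` does not charge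
the fixed points. -/
lemma nu_runCyl_le (hE : IsEigenData α β P H ν) (hα : 0 ≤ α) (hβ : 0 ≤ β) (a : Fin 3) (n : ℕ) :
    ν.real (runCyl a n) ≤ Real.exp (-P) ^ n := by
  have := hE.prob
  induction n with
  | zero => simp
  | succ n ih =>
    have h := eigen_indicator hE (isClopen_runCyl a (n + 1))
    have h2 : ∫ x, transfer α β ((runCyl a (n + 1)).indicator 1) x ∂ν
        ≤ ∫ x, (runCyl a n).indicator 1 x ∂ν := by
      have hi : Integrable ((runCyl a n).indicator (1 : Sig → ℝ)) ν :=
        (integrable_const (1 : ℝ)).indicator (isClopen_runCyl a n).isOpen.measurableSet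
      refine integral_mono_of_nonneg (ae_of_all _ fun x => ?_) hi (ae_of_all _ fun x => ?_)
      · exact Finset.sum_nonneg fun c _ => mul_nonneg (Real.exp_pos _).le
          (Set.indicator_nonneg (fun _ _ => zero_le_one) _)
      · rw [transfer_indicator (a := a) (s := runCyl a (n + 1))
          (fun x hx => (show ∀ i < n + 1, x i = a from hx) 0 (by omega))]
        by_cases hx : x ∈ runCyl a n
        · rw [Set.indicator_of_mem hx, Set.indicator_of_mem (cons_mem_runCyl.2 hx)]
          simp only [Pi.one_apply, mul_one, Real.exp_le_one_iff]
          exact mul_nonpos_of_nonneg_of_nonpos hβ (pot_nonpos hα _)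
        · rw [Set.indicator_of_notMem hx, Set.indicator_of_notMem (mt cons_mem_runCyl.1 hx)]
          simp
    rw [h, integral_indicator_one (isClopen_runCyl a n).isOpen.measurableSet] at h2
    have h3 := mul_le_mul_of_nonneg_left (h2.trans ih) (Real.exp_pos (-P)).le
    rwa [← mul_assoc, ← Real.exp_add, neg_add_cancel, Real.exp_zero, one_mul, ← pow_succ'] at h3

lemma nu_runCyl_succ (hE : IsEigenData α β P H ν) (a : Fin 3) (n : ℕ) :
    ν.real (runCyl a (n + 1)) = ν.real (runCyl a n) - ν.real (ringSet a n) := by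
  have := hE.prob
  rw [ringSet_eq, measureReal_sdiff (runCyl_succ_subset a n)
    (isClopen_runCyl a (n + 1)).isOpen.measurableSet]
  ring

lemma exp_neg_lt_one (hE : IsEigenData α β P H ν) : Real.exp (-P) < 1 :=
  Real.exp_lt_one_iff.2 (by linarith [hE.P_pos])

lemma tendsto_nu_runCyl (hE : IsEigenData α β P H ν) (hα : 0 ≤ α) (hβ : 0 ≤ β) (a : Fin 3) :
    Tendsto (fun n => ν.real (runCyl a n)) atTop (𝓝 0) :=
  squeeze_zero (fun _ => measureReal_nonneg) (nu_runCyl_le hE hα hβ a)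
    (tendsto_pow_atTop_nhds_zero_of_lt_one (Real.exp_pos _).le (exp_neg_lt_one hE))

/-- The rings `[a^n *_a]`, `n ≥ 0`, exhaust `Σ` up to a `ν`-null set, whence
`ν([a]ᶜ) W = 1`. -/
lemma nu_ring_zero (hE : IsEigenData α β P H ν) (hα : 0 ≤ α) (hβ : 0 ≤ β) {a : Fin 3} {κ : ℝ}
    (hκ : 0 ≤ κ)
    (hpot : ∀ n, ∀ x ∈ ringSet a (n + 1), pot α x = -(κ * (1 / 2) ^ (n + 1))) :
    ν.real (ringSet a 0) = 1 / Wsum (κ * β) (Real.exp (-P)) := by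
  have := hE.prob
  have hs := mul_nonneg hκ hβ
  have hpart : ∀ N, (∑ n ∈ Finset.range N, wt (κ * β) (Real.exp (-P)) n) * ν.real (ringSet a 0)
      = 1 - ν.real (runCyl a N) := by
    intro N
    induction N with
    | zero => simp [runCyl_zero]
    | succ N ih =>
      rw [Finset.sum_range_succ, add_mul, ih, ← nu_ring hE hpot, nu_runCyl_succ hE]; ring
  have l1 := (summable_wt hs (Real.exp_pos (-P)) (exp_neg_lt_one hE)).hasSum.tendsto_sum_nat
    |>.mul_const (ν.real (ringSet a 0))
  have l2 := (tendsto_nu_runCyl hE hα hβ a).const_sub 1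
  simp_rw [hpart] at l1
  have h := tendsto_nhds_unique l1 l2
  rw [eq_div_iff (Wsum_pos hs (Real.exp_pos (-P)) (exp_neg_lt_one hE)).ne', mul_comm, Wsum, h,
    sub_zero]

lemma nu_cyl_two (hE : IsEigenData α β P H ν) :
    ν.real (cyl 2) = Real.exp (-P) * Real.exp (-(α * β)) := by
  have := hE.prob
  have hcl : IsClopen (cyl 2) := isClopen_coord 2 0
  have h := eigen_indicator hE hcl
  have h2 : ∀ x, transfer α β ((cyl 2).indicator 1) x = Real.exp (-(α * β)) := by
    intro x
    rw [transfer_indicator (a := 2) subset_rfl, Set.indicator_of_mem (show cons 2 x ∈ cyl 2 from cons_zero 2 x), pot_two]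
    simp [mul_comm]
  simp_rw [h2] at h
  simp only [integral_const, probReal_univ, one_smul] at h
  rw [h, ← mul_assoc, ← Real.exp_add]
  simp

/-! ### The eigenfunction along a run -/

/-- Off the branch `a`, the terms of `L_β H` do not depend on the point of `[a]` at which they
are evaluated, and agree with those at `2^∞`. -/
lemma eigen_run (hE : IsEigenData α β P H ν) (hRC : LocallyRingConstant H) (a : Fin 3) :
    ∃ C : ℝ, ∀ n, Real.exp P * H (runPt a n)
      = C + Real.exp (β * pot α (runPt a (n + 1))) * H (runPt a (n + 1)) := by
  refine ⟨∑ c ∈ Finset.univ.erase a,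
    Real.exp (β * pot α (cons c (runPt a 0))) * H (cons c (runPt a 0)), fun n => ?_⟩
  rw [← hE.eigenFun, transfer, ← Finset.sum_erase_add _ _ (Finset.mem_univ a), cons_runPt]
  congr 1
  refine Finset.sum_congr rfl fun c hc => ?_
  have hca : c ≠ a := Finset.ne_of_mem_erase hc
  have hring : c ≠ 2 → ∀ m, cons c (runPt a m) ∈ ringSet c (0 + 1) := by
    intro h2 m
    rw [cons_mem_ringSet]
    refine ⟨by simp, ?_⟩
    simp only [runPt]
    split_ifs
    · exact hca.symm
    · exact h2.symm
  have hc3 : c = 0 ∨ c = 1 ∨ c = 2 := by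
    clear hc hca hring
    revert c; decide
  rcases hc3 with rfl | rfl | rfl
  · rw [pot_ring_zero α 0 _ (hring (by decide) n), pot_ring_zero α 0 _ (hring (by decide) 0),
      hRC.2.1 1 le_rfl _ (hring (by decide) n) _ (hring (by decide) 0)]
  · rw [pot_ring_one α 0 _ (hring (by decide) n), pot_ring_one α 0 _ (hring (by decide) 0),
      hRC.2.2 1 le_rfl _ (hring (by decide) n) _ (hring (by decide) 0)]
  · rw [pot_two, pot_two, hRC.1 _ (cons_zero 2 (runPt a n)) _ (cons_zero 2 (runPt a 0))]

/-- `r_n = w_n H(a^n 2^∞)`. -/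
def rSeq (s q : ℝ) (H : Sig → ℝ) (a : Fin 3) (n : ℕ) : ℝ := wt s q n * H (runPt a n)

lemma H_bdd (hE : IsEigenData α β P H ν) : ∃ K, ∀ x, H x ≤ K := by
  obtain ⟨K, hK⟩ := (isCompact_range hE.H_cont).bddAbove
  exact ⟨K, fun x => hK ⟨x, rfl⟩⟩

lemma tendsto_nat_mul_rSeq (hE : IsEigenData α β P H ν) {s : ℝ} (hs : 0 ≤ s) (a : Fin 3) :
    Tendsto (fun n : ℕ => (n : ℝ) * rSeq s (Real.exp (-P)) H a n) atTop (𝓝 0) := by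
  obtain ⟨K, hK⟩ := H_bdd hE
  have hq := Real.exp_pos (-P)
  have h := (tendsto_self_mul_const_pow_of_lt_one hq.le (exp_neg_lt_one hE)).mul_const K
  rw [zero_mul] at h
  refine squeeze_zero (fun n => ?_) (fun n => ?_) h
  · exact mul_nonneg n.cast_nonneg (mul_nonneg (wt_pos hq n).le (hE.H_pos _).le)
  · rw [mul_assoc]
    exact mul_le_mul_of_nonneg_left (mul_le_mul (wt_le hs hq n) (hK _) (hE.H_pos _).le
      (by positivity)) n.cast_nonneg

lemma tendsto_rSeq (hE : IsEigenData α β P H ν) {s : ℝ} (hs : 0 ≤ s) (a : Fin 3) :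
    Tendsto (rSeq s (Real.exp (-P)) H a) atTop (𝓝 0) := by
  have hq := Real.exp_pos (-P)
  refine squeeze_zero' (Eventually.of_forall fun n =>
    mul_nonneg (wt_pos hq n).le (hE.H_pos _).le) ?_ (tendsto_nat_mul_rSeq hE hs a)
  filter_upwards [eventually_ge_atTop 1] with n hn
  exact le_mul_of_one_le_left (mul_nonneg (wt_pos hq n).le (hE.H_pos _).le) (by exact_mod_cast hn)

/-- The eigenfunction equation along a run; the constant is identified by summing over all `n`,
since `r_0 = H(2^∞)` and `r_n → 0`. -/
lemma rSeq_rec (hE : IsEigenData α β P H ν) (hRC : LocallyRingConstant H) (hβ : 0 ≤ β)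
    {a : Fin 3} (ha : a ≠ 2) {κ : ℝ} (hκ : 0 ≤ κ)
    (hpot : ∀ n, ∀ x ∈ ringSet a (n + 1), pot α x = -(κ * (1 / 2) ^ (n + 1))) (n : ℕ) :
    rSeq (κ * β) (Real.exp (-P)) H a n =
      H (runPt a 0) / Wsum (κ * β) (Real.exp (-P)) * wt (κ * β) (Real.exp (-P)) n
      + rSeq (κ * β) (Real.exp (-P)) H a (n + 1) := by
  have hs := mul_nonneg hκ hβ
  have hq := Real.exp_pos (-P)
  obtain ⟨C, hC⟩ := eigen_run hE hRC a
  have hqq : Real.exp (-P) * Real.exp P = 1 := by rw [← Real.exp_add]; simp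
  have hrec : ∀ n, rSeq (κ * β) (Real.exp (-P)) H a n =
      Real.exp (-P) * C * wt (κ * β) (Real.exp (-P)) n
      + rSeq (κ * β) (Real.exp (-P)) H a (n + 1) := by
    intro n
    have h := hC n
    rw [hpot n _ (runPt_mem ha (n + 1)),
      show β * -(κ * (1 / 2) ^ (n + 1)) = -(κ * β * (1 / 2) ^ (n + 1)) by ring] at h
    unfold rSeq
    rw [wt_succ]
    have h' : H (runPt a n) = Real.exp (-P) * (Real.exp P * H (runPt a n)) := by
      rw [← mul_assoc, hqq, one_mul]
    rw [h', h]
    ring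
  have hpart : ∀ N, Real.exp (-P) * C * ∑ n ∈ Finset.range N, wt (κ * β) (Real.exp (-P)) n
      = H (runPt a 0) - rSeq (κ * β) (Real.exp (-P)) H a N := by
    intro N
    induction N with
    | zero => simp [rSeq, wt_zero]
    | succ N ih => rw [Finset.sum_range_succ, mul_add, ih, hrec N]; ring
  have l1 := (summable_wt hs hq (exp_neg_lt_one hE)).hasSum.tendsto_sum_nat
    |>.const_mul (Real.exp (-P) * C)
  have l2 := (tendsto_rSeq hE hs a).const_sub (H (runPt a 0))
  simp_rw [hpart] at l1
  have h := tendsto_nhds_unique l1 l2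
  rw [sub_zero] at h
  have hW := Wsum_pos hs hq (exp_neg_lt_one hE)
  rw [hrec n, ← h, ← Wsum, mul_div_cancel_right₀ _ hW.ne']

/-! ### Masses of the cylinders for `H dν` -/

lemma H_integrable (hE : IsEigenData α β P H ν) : Integrable H ν := by
  have := hE.prob
  obtain ⟨K, hK⟩ := H_bdd hE
  refine Integrable.of_bound hE.H_cont.aestronglyMeasurable K (ae_of_all _ fun x => ?_)
  rw [Real.norm_of_nonneg (hE.H_pos x).le]
  exact hK x

lemma setIntegral_ring (hE : IsEigenData α β P H ν) (hα : 0 ≤ α) (hβ : 0 ≤ β)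
    {a : Fin 3} (ha : a ≠ 2) {κ : ℝ} (hκ : 0 ≤ κ)
    (hpot : ∀ n, ∀ x ∈ ringSet a (n + 1), pot α x = -(κ * (1 / 2) ^ (n + 1)))
    {n : ℕ} (hconst : ∀ x ∈ ringSet a n, ∀ y ∈ ringSet a n, H x = H y) :
    ∫ x in ringSet a n, H x ∂ν
      = rSeq (κ * β) (Real.exp (-P)) H a n / Wsum (κ * β) (Real.exp (-P)) := by
  rw [setIntegral_congr_fun (isClopen_ringSet a n).isOpen.measurableSet
    (fun x hx => hconst x hx _ (runPt_mem ha n)), setIntegral_const, nu_ring hE hpot,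
    nu_ring_zero hE hα hβ hκ hpot, rSeq, smul_eq_mul]
  ring

lemma setIntegral_runCyl_succ (hE : IsEigenData α β P H ν) (a : Fin 3) (n : ℕ) :
    ∫ x in runCyl a (n + 1), H x ∂ν
      = ∫ x in runCyl a n, H x ∂ν - ∫ x in ringSet a n, H x ∂ν := by
  rw [ringSet_eq, setIntegral_sdiff (isClopen_runCyl a (n + 1)).isOpen.measurableSet
    (H_integrable hE).integrableOn (runCyl_succ_subset a n)]
  ring

lemma tendsto_setIntegral_runCyl (hE : IsEigenData α β P H ν) (hα : 0 ≤ α) (hβ : 0 ≤ β)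
    (a : Fin 3) : Tendsto (fun n => ∫ x in runCyl a n, H x ∂ν) atTop (𝓝 0) := by
  have := hE.prob
  obtain ⟨K, hK⟩ := H_bdd hE
  have h := (tendsto_nu_runCyl hE hα hβ a).mul_const K
  rw [zero_mul] at h
  refine squeeze_zero (fun n => integral_nonneg fun x => (hE.H_pos x).le) (fun n => ?_) h
  have := setIntegral_mono_on (μ := ν) (H_integrable hE).integrableOn
    (integrable_const K).integrableOn (isClopen_runCyl a n).isOpen.measurableSet (fun x _ => hK x)
  rwa [setIntegral_const, smul_eq_mul] at this

/-- The mass of `[a]` is `D Σ_{n ≥ 1} r_n` with `D = 1 / W`; Abel summation together with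
`r_n - r_{n+1} = H(2^∞) D w_n` turns it into `H(2^∞) D² M`. -/
lemma setIntegral_cyl (hE : IsEigenData α β P H ν) (hRC : LocallyRingConstant H)
    (hα : 0 ≤ α) (hβ : 0 ≤ β) {a : Fin 3} (ha : a ≠ 2) {κ : ℝ} (hκ : 0 ≤ κ)
    (hpot : ∀ n, ∀ x ∈ ringSet a (n + 1), pot α x = -(κ * (1 / 2) ^ (n + 1)))
    (hconst : ∀ n, 1 ≤ n → ∀ x ∈ ringSet a n, ∀ y ∈ ringSet a n, H x = H y) :
    ∫ x in runCyl a 1, H x ∂ν = H (runPt a 0) *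
      (Msum (κ * β) (Real.exp (-P)) / Wsum (κ * β) (Real.exp (-P)) ^ 2) := by
  have hs := mul_nonneg hκ hβ
  have hq := Real.exp_pos (-P)
  set W := Wsum (κ * β) (Real.exp (-P)) with hW
  set r := rSeq (κ * β) (Real.exp (-P)) H a with hr
  set w := wt (κ * β) (Real.exp (-P)) with hw
  have hrec : ∀ n, r n = H (runPt a 0) / W * w n + r (n + 1) :=
    rSeq_rec hE hRC hβ ha hκ hpot
  have hpart : ∀ N : ℕ, ∫ x in runCyl a 1, H x ∂ν
      = (H (runPt a 0) / W * ∑ n ∈ Finset.range (N + 1), (n : ℝ) * w n + N * r (N + 1)) / W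
        + ∫ x in runCyl a (N + 1), H x ∂ν := by
    intro N
    induction N with
    | zero => simp
    | succ N ih =>
      rw [ih, setIntegral_runCyl_succ hE a (N + 1),
        setIntegral_ring hE hα hβ ha hκ hpot (hconst (N + 1) (by omega)),
        Finset.sum_range_succ _ (N + 1), ← hr, ← hW, hrec (N + 1)]
      push_cast
      ring
  have l1 := ((summable_nat_mul_wt hs hq (exp_neg_lt_one hE)).hasSum.tendsto_sum_nat.comp
    (tendsto_add_atTop_nat 1)).const_mul (H (runPt a 0) / W)
  have l2 : Tendsto (fun N : ℕ => (N : ℝ) * r (N + 1)) atTop (𝓝 0) := by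
    have h1 := (tendsto_nat_mul_rSeq hE hs a).comp (tendsto_add_atTop_nat 1)
    refine squeeze_zero (fun N => ?_) (fun N => ?_) h1
    · exact mul_nonneg N.cast_nonneg (mul_nonneg (wt_pos hq _).le (hE.H_pos _).le)
    · exact mul_le_mul_of_nonneg_right (by simp)
        (mul_nonneg (wt_pos hq _).le (hE.H_pos _).le)
  have l3 := (tendsto_setIntegral_runCyl hE hα hβ a).comp (tendsto_add_atTop_nat 1)
  have l4 := ((l1.add l2).div_const W).add l3
  have l5 := l4.congr (fun N => (hpart N).symm)
  rw [tendsto_nhds_unique tendsto_const_nhds l5, Msum]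
  ring

lemma rSeq_le (hE : IsEigenData α β P H ν) (hRC : LocallyRingConstant H)
    (hβ : 0 ≤ β) {a : Fin 3} (ha : a ≠ 2) {κ : ℝ} (hκ : 0 ≤ κ)
    (hpot : ∀ n, ∀ x ∈ ringSet a (n + 1), pot α x = -(κ * (1 / 2) ^ (n + 1))) (n : ℕ) :
    rSeq (κ * β) (Real.exp (-P)) H a n ≤ H (runPt a 0) := by
  induction n with
  | zero => simp [rSeq, wt_zero]
  | succ n ih =>
    have h := rSeq_rec hE hRC hβ ha hκ hpot n
    have : 0 ≤ H (runPt a 0) / Wsum (κ * β) (Real.exp (-P)) * wt (κ * β) (Real.exp (-P)) n :=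
      mul_nonneg (div_nonneg (hE.H_pos _).le
        (Wsum_pos (mul_nonneg hκ hβ) (Real.exp_pos _) (exp_neg_lt_one hE)).le)
        (wt_pos (Real.exp_pos _) n).le
    linarith

/-- Within `[a]` almost no mass lies outside `[a^N]`: the defect is at most `N H(2^∞)`, while
`[a]` itself has mass of order `H(2^∞) e^{β}`. -/
lemma setIntegral_runCyl_ge (hE : IsEigenData α β P H ν) (hRC : LocallyRingConstant H)
    (hα : 0 ≤ α) (hβ : 0 ≤ β) {a : Fin 3} (ha : a ≠ 2) {κ : ℝ} (hκ : 0 ≤ κ)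
    (hpot : ∀ n, ∀ x ∈ ringSet a (n + 1), pot α x = -(κ * (1 / 2) ^ (n + 1)))
    (hconst : ∀ n, 1 ≤ n → ∀ x ∈ ringSet a n, ∀ y ∈ ringSet a n, H x = H y) (N : ℕ) :
    ∫ x in runCyl a 1, H x ∂ν - N * H (runPt a 0) ≤ ∫ x in runCyl a (N + 1), H x ∂ν := by
  induction N with
  | zero => simp
  | succ N ih =>
    have hs := mul_nonneg hκ hβ
    have hq := Real.exp_pos (-P)
    have hW1 : 1 ≤ Wsum (κ * β) (Real.exp (-P)) := by
      have h1 := Wsum_ge hs hq (exp_neg_lt_one hE)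
      have h2 : 0 ≤ Real.exp (-(κ * β)) * (Real.exp (-P) / (1 - Real.exp (-P))) :=
        mul_nonneg (Real.exp_pos _).le
          (div_nonneg hq.le (by linarith [exp_neg_lt_one hE]))
      linarith
    rw [setIntegral_runCyl_succ hE a (N + 1),
      setIntegral_ring hE hα hβ ha hκ hpot (hconst (N + 1) (by omega))]
    have h1 : rSeq (κ * β) (Real.exp (-P)) H a (N + 1) / Wsum (κ * β) (Real.exp (-P))
        ≤ rSeq (κ * β) (Real.exp (-P)) H a (N + 1) :=
      div_le_self (mul_nonneg (wt_pos hq _).le (hE.H_pos _).le) hW1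
    have h2 := rSeq_le hE hRC hβ ha hκ hpot (N + 1)
    push_cast
    linarith

lemma setIntegral_runCyl_le (hE : IsEigenData α β P H ν) (a : Fin 3) (N : ℕ) :
    ∫ x in runCyl a (N + 1), H x ∂ν ≤ ∫ x in runCyl a 1, H x ∂ν :=
  setIntegral_mono_set (H_integrable hE).integrableOn (ae_of_all _ fun x => (hE.H_pos x).le)
    (Eventually.of_forall fun _ hx i hi => hx i (by omega))

lemma setIntegral_two (hE : IsEigenData α β P H ν) (hRC : LocallyRingConstant H) (a : Fin 3) :
    ∫ x in cyl 2, H x ∂ν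
      = H (runPt a 0) * (Real.exp (-P) * Real.exp (-(α * β))) := by
  have h2 : MeasurableSet (cyl 2) := (isClopen_coord 2 0).isOpen.measurableSet
  rw [setIntegral_congr_fun h2 (fun x hx => hRC.1 x hx (runPt a 0) (by simp [cyl, runPt])),
    setIntegral_const, nu_cyl_two hE, smul_eq_mul]
  ring

lemma integral_split {μ : Measure Sig} {g : Sig → ℝ} (hg : Integrable g μ) :
    ∫ x, g x ∂μ = ∫ x in cyl 0, g x ∂μ + ∫ x in cyl 1, g x ∂μ + ∫ x in cyl 2, g x ∂μ := by
  have hm : ∀ a : Fin 3, MeasurableSet (cyl a) := fun a => (isClopen_coord a 0).isOpen.measurableSet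
  have hU : (Set.univ : Set Sig) = ⋃ a, cyl a := by ext x; simp [cyl]
  rw [← setIntegral_univ, hU, integral_iUnion_fintype hm ?_ fun a => hg.integrableOn,
    Fin.sum_univ_three]
  intro a b hab
  exact Set.disjoint_left.2 fun x hx hx' => hab (hx.symm.trans hx')

/-- The eigenvalue equation `1 / W_0 + 1 / W_1 = 1 + e^{-P} e^{-αβ}`, which is
`ν[0] + ν[1] + ν[2] = 1`. -/
lemma pressure_eq (hE : IsEigenData α β P H ν) (hα : 0 ≤ α) (hβ : 0 ≤ β) :
    1 / Wsum β (Real.exp (-P)) + 1 / Wsum (3 * β) (Real.exp (-P))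
      = 1 + Real.exp (-P) * Real.exp (-(α * β)) := by
  have := hE.prob
  have h := integral_split (integrable_const (1 : ℝ) (μ := ν))
  simp only [integral_const, probReal_univ, smul_eq_mul, mul_one, measureReal_restrict_apply_univ] at h
  have h0 := nu_ring_zero hE hα hβ zero_le_one (pot_ring_zero α)
  have h1 := nu_ring_zero hE hα hβ (by norm_num) (pot_ring_one α)
  rw [one_mul] at h0
  rw [nu_cyl_two hE] at h
  have c : ∀ a, ν.real (ringSet a 0) = 1 - ν.real (cyl a) := by
    intro a
    have := nu_runCyl_succ hE a 0
    rw [zero_add, runCyl_one, runCyl_zero, probReal_univ] at this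
    linarith
  rw [← h0, ← h1, c, c]
  linarith

end measure

/-! ### Weak convergence -/

lemma runPt_zero_eq (a b : Fin 3) : runPt a 0 = runPt b 0 := by funext i; simp [runPt]

lemma integral_H_pos {α β P : ℝ} {H : Sig → ℝ} {ν : Measure Sig} (hE : IsEigenData α β P H ν) :
    0 < ∫ x, H x ∂ν := by
  have := hE.prob
  rw [integral_pos_iff_support_of_nonneg (fun x => (hE.H_pos x).le) (H_integrable hE)]
  have : Function.support H = Set.univ := by
    ext x; simpa using (hE.H_pos x).ne'
  rw [this]
  simp

lemma gibbs_integral {α β P : ℝ} {H : Sig → ℝ} {ν : Measure Sig} (hE : IsEigenData α β P H ν)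
    (f : Sig → ℝ) : ∫ x, f x ∂(gibbs H ν) = (∫ x, H x * f x ∂ν) / ∫ x, H x ∂ν := by
  rw [gibbs, integral_smul_measure, integral_withDensity_eq_integral_toReal_smul
    hE.H_cont.measurable.ennreal_ofReal (by simp), withDensity_apply _ MeasurableSet.univ,
    Measure.restrict_univ, ← ofReal_integral_eq_lintegral_ofReal (H_integrable hE)
      (ae_of_all _ fun x => (hE.H_pos x).le), ENNReal.toReal_inv,
    ENNReal.toReal_ofReal (integral_H_pos hE).le, smul_eq_mul, div_eq_inv_mul]
  congr 2
  funext x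
  rw [ENNReal.toReal_ofReal (hE.H_pos x).le, smul_eq_mul]

lemma disjoint_runCyl (m n : ℕ) (x : Sig) (h0 : x ∈ runCyl 0 (m + 1)) :
    x ∉ runCyl 1 (n + 1) := fun h1 => by
  have a0 : x 0 = 0 := h0 0 (by omega)
  have a1 : x 0 = 1 := h1 0 (by omega)
  rw [a0] at a1
  exact absurd a1 (by decide)

/-- If `f` is within `ε` of `b_a` on `[a^{N+1}]` for `a = 0, 1` and bounded by `K`, its integral
against `H dν` is controlled by the masses of these two cylinders. -/
lemma integral_approx {α β P : ℝ} {H : Sig → ℝ} {ν : Measure Sig} (hE : IsEigenData α β P H ν)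
    {f : Sig → ℝ} (hf : Continuous f) {K ε b0 b1 : ℝ} (hK : ∀ x, |f x| ≤ K) (hε : 0 ≤ ε) {N : ℕ}
    (h0 : ∀ x ∈ runCyl 0 (N + 1), |f x - b0| ≤ ε) (h1 : ∀ x ∈ runCyl 1 (N + 1), |f x - b1| ≤ ε) :
    |∫ x, H x * f x ∂ν - b0 * ∫ x in runCyl 0 (N + 1), H x ∂ν
        - b1 * ∫ x in runCyl 1 (N + 1), H x ∂ν|
      ≤ ε * ∫ x, H x ∂ν + K * (∫ x, H x ∂ν - ∫ x in runCyl 0 (N + 1), H x ∂ν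
        - ∫ x in runCyl 1 (N + 1), H x ∂ν) := by
  have hm : ∀ a, MeasurableSet (runCyl a (N + 1)) :=
    fun a => (isClopen_runCyl a (N + 1)).isOpen.measurableSet
  have hH := H_integrable hE
  have hHi : ∀ a, Integrable ((runCyl a (N + 1)).indicator H) ν := fun a => hH.indicator (hm a)
  have hHf : Integrable (fun x => H x * f x) ν :=
    hH.mul_bdd hf.aestronglyMeasurable (ae_of_all _ fun x => hK x)
  have hJ0 : Integrable (fun x => H x * f x - b0 * (runCyl 0 (N + 1)).indicator H x) ν :=
    hHf.sub ((hHi 0).const_mul b0)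
  have hJ1 : Integrable (fun x => H x - (runCyl 0 (N + 1)).indicator H x) ν := hH.sub (hHi 0)
  have hJ2 : Integrable (fun x => K * (H x - (runCyl 0 (N + 1)).indicator H x
      - (runCyl 1 (N + 1)).indicator H x)) ν := (hJ1.sub (hHi 1)).const_mul K
  simp only [← integral_indicator (hm _)]
  rw [← integral_const_mul b0, ← integral_const_mul b1, ← integral_const_mul ε,
    ← integral_sub hHf ((hHi 0).const_mul b0),
    ← integral_sub hJ0 ((hHi 1).const_mul b1),
    ← integral_sub hH (hHi 0), ← integral_sub hJ1 (hHi 1), ← integral_const_mul K,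
    ← integral_add (hH.const_mul ε) hJ2]
  refine norm_integral_le_of_norm_le (f := fun x => H x * f x
      - b0 * (runCyl 0 (N + 1)).indicator H x - b1 * (runCyl 1 (N + 1)).indicator H x)
    ((hH.const_mul ε).add hJ2) (ae_of_all _ fun x => ?_)
  have hp := hE.H_pos x
  simp only [Real.norm_eq_abs]
  by_cases m0 : x ∈ runCyl 0 (N + 1)
  · have m1 := disjoint_runCyl N N x m0
    rw [Set.indicator_of_mem m0, Set.indicator_of_notMem m1]
    have : H x * f x - b0 * H x - b1 * 0 = H x * (f x - b0) := by ring
    rw [this, abs_mul, abs_of_pos hp]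
    nlinarith [h0 x m0]
  · rw [Set.indicator_of_notMem m0]
    by_cases m1 : x ∈ runCyl 1 (N + 1)
    · rw [Set.indicator_of_mem m1]
      have : H x * f x - b0 * 0 - b1 * H x = H x * (f x - b1) := by ring
      rw [this, abs_mul, abs_of_pos hp]
      nlinarith [h1 x m1]
    · rw [Set.indicator_of_notMem m1]
      have : H x * f x - b0 * 0 - b1 * 0 = H x * f x := by ring
      rw [this, abs_mul, abs_of_pos hp]
      nlinarith [hK x, mul_nonneg hε hp.le]

/-- The cylinders `[a^{n+1}]` form a neighbourhood basis of `a^∞`. -/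
lemma exists_runCyl {f : Sig → ℝ} (hf : Continuous f) (a : Fin 3) {ε : ℝ} (hε : 0 < ε) :
    ∃ N, ∀ n ≥ N, ∀ x ∈ runCyl a (n + 1), |f x - f fun _ => a| ≤ ε := by
  have h : ∀ᶠ x in 𝓝 (fun _ => a : Sig), |f x - f fun _ => a| < ε := by
    have := Metric.tendsto_nhds.1 (hf.tendsto (fun _ => a : Sig)) ε hε
    simpa [Real.dist_eq] using this
  rw [nhds_pi, Filter.eventually_iff, Filter.mem_pi] at h
  obtain ⟨I, hI, t, ht, hsub⟩ := h
  obtain ⟨N, hN⟩ := hI.bddAbove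
  refine ⟨N, fun n hn x hx => ?_⟩
  refine le_of_lt (hsub (fun i hi => ?_))
  have hxi : x i = a := hx i (by have := hN hi; omega)
  rw [hxi]
  exact mem_of_mem_nhds (ht i)

/-- For every `N`, the Gibbs masses of `[0^{N+1}]` and `[1^{N+1}]` tend to `1/2`. -/
lemma tendsto_mass {α : ℝ} (hα : 1 < α) {P : ℝ → ℝ} {H : ℝ → Sig → ℝ} {ν : ℝ → Measure Sig}
    (hE : ∀ β > (0 : ℝ), IsEigenData α β (P β) (H β) (ν β))
    (hRC : ∀ β > (0 : ℝ), LocallyRingConstant (H β)) (N : ℕ) :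
    Tendsto (fun β => (∫ x in runCyl 0 (N + 1), H β x ∂(ν β)) / ∫ x, H β x ∂(ν β))
      atTop (𝓝 (1 / 2)) ∧
    Tendsto (fun β => (∫ x in runCyl 1 (N + 1), H β x ∂(ν β)) / ∫ x, H β x ∂(ν β))
      atTop (𝓝 (1 / 2)) := by
  have hα0 : 0 ≤ α := by linarith
  set q : ℝ → ℝ := fun β => Real.exp (-P β) with hq
  obtain ⟨t0, t1⟩ := asymptotics (q := q) hα
    (fun β hβ => ⟨Real.exp_pos _, exp_neg_lt_one (hE β hβ)⟩)
    (fun β hβ => pressure_eq (hE β hβ) hα0 hβ.le)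
  set X0 : ℝ → ℝ := fun β => Real.exp (-β) * (Msum β (q β) / Wsum β (q β) ^ 2) with hX0
  set X1 : ℝ → ℝ := fun β =>
    Real.exp (-β) * (Msum (3 * β) (q β) / Wsum (3 * β) (q β) ^ 2) with hX1
  set X2 : ℝ → ℝ := fun β => Real.exp (-β) * (q β * Real.exp (-(α * β))) with hX2
  have te : Tendsto (fun β : ℝ => Real.exp (-β)) atTop (𝓝 0) :=
    Real.tendsto_exp_neg_atTop_nhds_zero
  have hev : ∀ᶠ β : ℝ in atTop, 0 < β := eventually_gt_atTop 0
  have t2 : Tendsto X2 atTop (𝓝 0) := by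
    refine squeeze_zero' (Eventually.of_forall fun β => by simp only [hX2, hq]; positivity) ?_ te
    filter_upwards [hev] with β hβ
    have h1 : q β ≤ 1 := (exp_neg_lt_one (hE β hβ)).le
    have h2 : Real.exp (-(α * β)) ≤ 1 := by rw [Real.exp_le_one_iff]; nlinarith
    exact mul_le_of_le_one_right (Real.exp_pos _).le
      (mul_le_one₀ h1 (Real.exp_pos _).le h2)
  have tden : Tendsto (fun β => X0 β + X1 β + X2 β) atTop (𝓝 2) := by
    have := (t0.add t1).add t2
    norm_num at this
    exact this
  have tNe : Tendsto (fun β : ℝ => (N : ℝ) * Real.exp (-β)) atTop (𝓝 0) := by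
    simpa using te.const_mul (N : ℝ)
  have main : ∀ (a : Fin 3) (X : ℝ → ℝ), Tendsto X atTop (𝓝 1) →
      (∀ β > 0, Real.exp (-β) * ∫ x in runCyl a 1, H β x ∂(ν β) = H β (runPt 0 0) * X β ∧
        ∫ x in runCyl a 1, H β x ∂(ν β) - N * H β (runPt 0 0)
          ≤ ∫ x in runCyl a (N + 1), H β x ∂(ν β)) →
      Tendsto (fun β => (∫ x in runCyl a (N + 1), H β x ∂(ν β)) / ∫ x, H β x ∂(ν β))
        atTop (𝓝 (1 / 2)) := by
    intro a X tX hX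
    have hmid : ∀ β > 0, Real.exp (-β) * ∫ x, H β x ∂(ν β)
        = H β (runPt 0 0) * (X0 β + X1 β + X2 β) := by
      intro β hβ
      have i0 := setIntegral_cyl (hE β hβ) (hRC β hβ) hα0 hβ.le (a := 0) (by decide)
        zero_le_one (pot_ring_zero α) (hRC β hβ).2.1
      have i1 := setIntegral_cyl (hE β hβ) (hRC β hβ) hα0 hβ.le (a := 1) (by decide)
        (by norm_num) (pot_ring_one α) (hRC β hβ).2.2
      rw [integral_split (H_integrable (hE β hβ)), ← runCyl_one 0, ← runCyl_one 1, i0, i1,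
        setIntegral_two (hE β hβ) (hRC β hβ) 0, runPt_zero_eq 1 0, one_mul]
      simp only [hX0, hX1, hX2, hq]
      ring
    have l : Tendsto (fun β => (X β - N * Real.exp (-β)) / (X0 β + X1 β + X2 β)) atTop
        (𝓝 (1 / 2)) := by
      have := (tX.sub tNe).div tden two_ne_zero
      rw [sub_zero] at this
      exact this
    have u : Tendsto (fun β => X β / (X0 β + X1 β + X2 β)) atTop (𝓝 (1 / 2)) :=
      tX.div tden two_ne_zero
    have hnorm : ∀ β > 0, (∫ x in runCyl a (N + 1), H β x ∂(ν β)) / ∫ x, H β x ∂(ν β)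
        = (Real.exp (-β) * ∫ x in runCyl a (N + 1), H β x ∂(ν β)) / H β (runPt 0 0)
          / (X0 β + X1 β + X2 β) := by
      intro β hβ
      rw [div_div, ← hmid β hβ, mul_div_mul_left _ _ (Real.exp_pos _).ne']
    have hden : ∀ β > 0, 0 ≤ X0 β + X1 β + X2 β := by
      intro β hβ
      have h1 := mul_pos (Real.exp_pos (-β)) (integral_H_pos (hE β hβ))
      rw [hmid β hβ] at h1
      exact (pos_of_mul_pos_right h1 ((hE β hβ).H_pos _).le).le
    refine tendsto_of_tendsto_of_tendsto_of_le_of_le' l u ?_ ?_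
    · filter_upwards [hev] with β hβ
      have hp := (hE β hβ).H_pos (runPt 0 0)
      rw [hnorm β hβ]
      refine div_le_div_of_nonneg_right ?_ (hden β hβ)
      rw [le_div_iff₀ hp]
      have := mul_le_mul_of_nonneg_left (hX β hβ).2 (Real.exp_pos (-β)).le
      rw [mul_sub, (hX β hβ).1] at this
      linarith
    · filter_upwards [hev] with β hβ
      have hp := (hE β hβ).H_pos (runPt 0 0)
      rw [hnorm β hβ]
      refine div_le_div_of_nonneg_right ?_ (hden β hβ)
      rw [div_le_iff₀ hp]
      have := mul_le_mul_of_nonneg_left (setIntegral_runCyl_le (hE β hβ) a N)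
        (Real.exp_pos (-β)).le
      rw [(hX β hβ).1] at this
      linarith
  constructor
  · refine main 0 X0 t0 fun β hβ => ⟨?_, setIntegral_runCyl_ge (hE β hβ) (hRC β hβ) hα0 hβ.le
      (by decide) zero_le_one (pot_ring_zero α) (hRC β hβ).2.1 N⟩
    rw [setIntegral_cyl (hE β hβ) (hRC β hβ) hα0 hβ.le (a := 0) (by decide)
      zero_le_one (pot_ring_zero α) (hRC β hβ).2.1, one_mul]
    simp only [hX0, hq]
    ring
  · refine main 1 X1 t1 fun β hβ => ⟨?_, ?_⟩
    · rw [setIntegral_cyl (hE β hβ) (hRC β hβ) hα0 hβ.le (a := 1) (by decide)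
        (by norm_num) (pot_ring_one α) (hRC β hβ).2.2, runPt_zero_eq 1 0]
      simp only [hX1, hq]
      ring
    · have := setIntegral_runCyl_ge (hE β hβ) (hRC β hβ) hα0 hβ.le (a := 1)
        (by decide) (by norm_num) (pot_ring_one α) (hRC β hβ).2.2 N
      rwa [runPt_zero_eq 1 0] at this

/-- For `α > 1`, the Gibbs measures `μ_β` converge weakly to `½(δ_{0^∞} + δ_{1^∞})`. -/
theorem gibbs_weak_limit_alpha_gt_one (α : ℝ) (hα : 1 < α)
    (P : ℝ → ℝ) (H : ℝ → Sig → ℝ) (ν : ℝ → Measure Sig)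
    (hE : ∀ β > (0 : ℝ), IsEigenData α β (P β) (H β) (ν β))
    (hRC : ∀ β > (0 : ℝ), LocallyRingConstant (H β)) :
    WeakLimit (fun β => gibbs (H β) (ν β))
      (((1 : ENNReal) / 2) • (Measure.dirac zeroSeq + Measure.dirac oneSeq)) := by
  intro f hf ⟨K, hK⟩
  have hlim : ∫ x, f x ∂(((1 : ENNReal) / 2) • (Measure.dirac zeroSeq + Measure.dirac oneSeq))
      = (f zeroSeq + f oneSeq) / 2 := by
    have hi : ∀ z : Sig, Integrable f (Measure.dirac z) := fun z =>
      Integrable.of_bound hf.aestronglyMeasurable K (ae_of_all _ fun x => hK x)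
    rw [integral_smul_measure, integral_add_measure (hi _) (hi _), integral_dirac, integral_dirac]
    simp only [one_div, ENNReal.toReal_inv, ENNReal.toReal_ofNat, smul_eq_mul]
    ring
  rw [hlim, Metric.tendsto_nhds]
  intro ε hε
  obtain ⟨N0, hN0⟩ := exists_runCyl hf 0 (half_pos hε)
  obtain ⟨N1, hN1⟩ := exists_runCyl hf 1 (half_pos hε)
  set N := max N0 N1
  obtain ⟨u0, u1⟩ := tendsto_mass hα hE hRC N
  set U0 : ℝ → ℝ := fun β => (∫ x in runCyl 0 (N + 1), H β x ∂(ν β)) / ∫ x, H β x ∂(ν β) with hU0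
  set U1 : ℝ → ℝ := fun β => (∫ x in runCyl 1 (N + 1), H β x ∂(ν β)) / ∫ x, H β x ∂(ν β) with hU1
  have hbd : Tendsto (fun β => ε / 2 + K * (1 - U0 β - U1 β)
      + |f zeroSeq * U0 β + f oneSeq * U1 β - (f zeroSeq + f oneSeq) / 2|) atTop (𝓝 (ε / 2)) := by
    have h := ((((u0.const_sub 1).sub u1).const_mul K).const_add (ε / 2)).add
      (((u0.const_mul (f zeroSeq)).add (u1.const_mul (f oneSeq))).sub_const
        ((f zeroSeq + f oneSeq) / 2)).abs
    refine h.trans (le_of_eq ?_)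
    congr 1
    have : f zeroSeq * (1 / 2) + f oneSeq * (1 / 2) - (f zeroSeq + f oneSeq) / 2 = 0 := by ring
    rw [this, abs_zero]
    ring
  filter_upwards [eventually_gt_atTop 0, hbd.eventually_lt_const (half_lt_self hε)] with β hβ hlt
  refine lt_of_le_of_lt ?_ hlt
  have hI := integral_H_pos (hE β hβ)
  have happ := integral_approx (hE β hβ) hf hK (half_pos hε).le
    (hN0 N (le_max_left _ _)) (hN1 N (le_max_right _ _))
  rw [Real.dist_eq, gibbs_integral (hE β hβ)]
  have h0 : ∫ x in runCyl 0 (N + 1), H β x ∂(ν β) = U0 β * ∫ x, H β x ∂(ν β) := by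
    simp only [hU0]; field_simp
  have h1 : ∫ x in runCyl 1 (N + 1), H β x ∂(ν β) = U1 β * ∫ x, H β x ∂(ν β) := by
    simp only [hU1]; field_simp
  rw [h0, h1] at happ
  set I := ∫ x, H β x ∂(ν β) with hIdef
  set J := ∫ x, H β x * f x ∂(ν β) with hJdef
  change |J - f zeroSeq * (U0 β * I) - f oneSeq * (U1 β * I)| ≤ _ at happ
  have e1 : J - f zeroSeq * (U0 β * I) - f oneSeq * (U1 β * I)
      = (J / I - (f zeroSeq * U0 β + f oneSeq * U1 β)) * I := by field_simp; ring
  have e2 : ε / 2 * I + K * (I - U0 β * I - U1 β * I)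
      = (ε / 2 + K * (1 - U0 β - U1 β)) * I := by ring
  rw [e1, e2, abs_mul, abs_of_pos hI] at happ
  have h3 := le_of_mul_le_mul_right happ hI
  calc |J / I - (f zeroSeq + f oneSeq) / 2|
      ≤ |J / I - (f zeroSeq * U0 β + f oneSeq * U1 β)|
        + |f zeroSeq * U0 β + f oneSeq * U1 β - (f zeroSeq + f oneSeq) / 2| :=
        abs_sub_le _ _ _
    _ ≤ _ := by gcongr

end
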